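/- Let the r×r stochastic transition matrix P = {p(j|k)} be irreducible and let m be a nonzero integer. Then ρ(A_m) = 1 if and only if there exist real numbers s and w₁,…,w_r such that for every pair (j,k) with p(j|k) > 0, ⟨−m·log p(j|k)⟩ = ⟨s + w_k − w_j⟩. -/

import Mathlib

/-!
The matrix `A_m` is the transpose of `P` with each entry multiplied by a unit complex number
`u j k`. Such a matrix has maximum row sum `1`, hence spectral radius at most `1`. If
`u j k * z k = c * z j` along the transitions, with `c` and the `z k` on the unit circle, then `z`
is an eigenvector for the eigenvalue `c`, and the bound is attained.

Conversely, let `A v = c v` with `‖c‖ = 1`. At an index `j` where `‖v j‖` is maximal, `c * v j` is a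
convex combination of the numbers `u j k * v k`, none of which has larger modulus. Strict convexity
of the disc makes each of them with positive weight equal to `c * v j`, so maximality of the modulus
propagates along transitions, by irreducibility to every index. Dividing `v` by this common modulus
gives the points `z k`, and taking arguments turns the multiplicative relation into the congruence.
-/

/-!
STATEMENT 17: For an irreducible stochastic matrix P and a nonzero integer m,
ρ(A_m) = 1 iff there exist reals s and w₁,…,w_r such that
⟨−m·log p(j|k)⟩ = ⟨s + w_k − w_j⟩ whenever p(j|k) > 0.
The alphabet is `Fin (r+2)`; `p j k = p(j|k)`.
-/

/-- The transition matrix `P` with entry `(j,k)` equal to `p(j|k)`. -/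
def Pmat {r : ℕ} (p : Fin r → Fin r → ℝ) : Matrix (Fin r) (Fin r) ℝ :=
  Matrix.of fun j k => p j k

/-- The matrix A_m with (j,k) entry p(k|j)·exp(−2πi·m·log₂ p(k|j)) when
p(k|j) > 0 and 0 otherwise. -/
noncomputable def Amat {r : ℕ} (p : Fin r → Fin r → ℝ) (m : ℤ) :
    Matrix (Fin r) (Fin r) ℂ :=
  Matrix.of fun j k =>
    if 0 < p k j then
      (p k j : ℂ) *
        Complex.exp (-(2 * (Real.pi : ℂ) * Complex.I * (m : ℂ) *
          ((Real.logb 2 (p k j) : ℝ) : ℂ)))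
    else 0

/-- Spectral radius: supremum of the moduli of the eigenvalues. -/
noncomputable def specRad {r : ℕ} (A : Matrix (Fin r) (Fin r) ℂ) : ℝ :=
  sSup {x : ℝ | ∃ lam : ℂ,
    (∃ v : Fin r → ℂ, v ≠ 0 ∧ A.mulVec v = lam • v) ∧ x = ‖lam‖}

open scoped FourierTransform

lemma eq_sum_smul_of_norm_le {ι E : Type*} [NormedAddCommGroup E] [NormedSpace ℝ E]
    [StrictConvexSpace ℝ E] {t : Finset ι} {w : ι → ℝ} {z : ι → E} (h₀ : ∀ i ∈ t, 0 ≤ w i)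
    (h₁ : ∑ i ∈ t, w i = 1) (hz : ∀ i ∈ t, ‖z i‖ ≤ ‖∑ k ∈ t, w k • z k‖) {i : ι} (hi : i ∈ t)
    (hwi : w i ≠ 0) : z i = ∑ k ∈ t, w k • z k := by
  have eq_of_weight_ne_zero : ∀ k ∈ t, w k ≠ 0 → z i = z k := fun k hk hwk => by
    by_contra hne
    exact (norm_sum_lt_of_strictConvexSpace h₀ h₁ hi hk hne hwi hwk hz).false
  calc z i = ∑ k ∈ t, w k • z i := by rw [← Finset.sum_smul, h₁, one_smul]
    _ = ∑ k ∈ t, w k • z k := Finset.sum_congr rfl fun k hk => by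
      by_cases hwk : w k = 0
      · rw [hwk, zero_smul, zero_smul]
      · rw [eq_of_weight_ne_zero k hk hwk]

lemma forall_of_isIrreducible {n R : Type*} [Ring R] [LinearOrder R] {A : Matrix n n R}
    (hA : A.IsIrreducible) {S : n → Prop} (hS : ∀ i j, 0 < A i j → S i → S j) {i : n} (hi : S i)
    (j : n) : S j := by
  let := A.toQuiver
  obtain ⟨path, -⟩ := hA.connected i j
  induction path with
  | nil => exact hi
  | cons _ edge ih => exact hS _ _ edge.down ih

lemma mem_spectrum_iff_exists_mulVec_eq_smul {n K : Type*} [Fintype n] [DecidableEq n] [Field K]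
    {A : Matrix n n K} {μ : K} : μ ∈ spectrum K A ↔ ∃ v, v ≠ 0 ∧ A.mulVec v = μ • v := by
  rw [← Matrix.spectrum_toLin', ← Module.End.hasEigenvalue_iff_mem_spectrum]
  constructor
  · intro h
    obtain ⟨v, hv⟩ := h.exists_hasEigenvector
    exact ⟨v, hv.2, by rw [← Matrix.toLin'_apply, hv.apply_eq_smul]⟩
  · rintro ⟨v, hv, hAv⟩
    exact Module.End.hasEigenvalue_of_hasEigenvector
      ⟨Module.End.mem_eigenspace_iff.mpr (by rw [Matrix.toLin'_apply, hAv]), hv⟩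

lemma specRad_eq_toReal_spectralRadius {r : ℕ} (A : Matrix (Fin r) (Fin r) ℂ) :
    specRad A = (spectralRadius ℂ A).toReal := by
  have heq : {x : ℝ | ∃ lam : ℂ, (∃ v, v ≠ 0 ∧ A.mulVec v = lam • v) ∧ x = ‖lam‖} =
      norm '' spectrum ℂ A := by
    ext x
    simp only [← mem_spectrum_iff_exists_mulVec_eq_smul, Set.mem_ofPred_eq, Set.mem_image, eq_comm]
  rw [specRad, heq, spectralRadius, ← sSup_image, ENNReal.toReal_sSup _ (by simp), Set.image_image]
  rfl

lemma specRad_eq_one_iff {r : ℕ} (A : Matrix (Fin r) (Fin r) ℂ) :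
    specRad A = 1 ↔ spectralRadius ℂ A = 1 := by
  rw [specRad_eq_toReal_spectralRadius, ENNReal.toReal_eq_one_iff]

lemma exists_circle_eq_norm_mul (x : ℂ) : ∃ z : Circle, x = ‖x‖ * z :=
  ⟨Circle.exp x.arg, by rw [Circle.coe_exp, Complex.norm_mul_exp_arg_mul_I]⟩

lemma fourierChar_surjective : Function.Surjective 𝐞 := fun z => by
  obtain ⟨t, rfl⟩ := Circle.exp_surjective z
  exact ⟨t / (2 * Real.pi), by rw [Real.fourierChar_apply', mul_div_cancel₀ _ Real.two_pi_pos.ne']⟩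

lemma fourierChar_eq_fourierChar_iff {x y : ℝ} : 𝐞 x = 𝐞 y ↔ Int.fract x = Int.fract y := by
  rw [Real.fourierChar_apply', Real.fourierChar_apply', Circle.exp_eq_exp, Int.fract_eq_fract]
  refine exists_congr fun n => ?_
  rw [mul_comm (n : ℝ), ← mul_add, mul_right_inj' Real.two_pi_pos.ne', sub_eq_iff_eq_add']

section PhaseTwist

variable {ι : Type*}

/-- The matrix `Q` with its `(j, k)` entry multiplied by the unit complex number `u j k`. The
matrices `A_m` are of this form, with `Q` the transpose of the transition matrix. -/
noncomputable def phaseTwist (Q : Matrix ι ι ℝ) (u : ι → ι → Circle) : Matrix ι ι ℂ :=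
  Matrix.of fun j k => Q j k • (u j k : ℂ)

variable [Fintype ι]

lemma phaseTwist_mulVec_apply (Q : Matrix ι ι ℝ) (u : ι → ι → Circle) (v : ι → ℂ) (j : ι) :
    (phaseTwist Q u).mulVec v j = ∑ k, Q j k • ((u j k : ℂ) * v k) :=
  Finset.sum_congr rfl fun k _ => smul_mul_assoc (Q j k) (u j k : ℂ) (v k)

variable [DecidableEq ι] {Q : Matrix ι ι ℝ} {u : ι → ι → Circle}

open scoped Matrix.Norms.Operator in
lemma spectralRadius_phaseTwist_le_one [Nonempty ι] (hQ : Q ∈ Matrix.rowStochastic ℝ ι) :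
    spectralRadius ℂ (phaseTwist Q u) ≤ 1 := by
  have norm_row (j : ι) : ∑ k, ‖phaseTwist Q u j k‖₊ = 1 := by
    rw [← NNReal.coe_inj, NNReal.coe_sum, NNReal.coe_one,
      ← Matrix.sum_row_of_mem_rowStochastic hQ j]
    refine Finset.sum_congr rfl fun k _ => ?_
    rw [coe_nnnorm, phaseTwist, Matrix.of_apply, norm_smul, Circle.norm_coe, mul_one,
      Real.norm_of_nonneg (Matrix.nonneg_of_mem_rowStochastic hQ)]
  have norm_le : ‖phaseTwist Q u‖₊ ≤ 1 := by
    rw [Matrix.linfty_opNNNorm_def]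
    exact Finset.sup_le fun j _ => (norm_row j).le
  exact (spectrum.spectralRadius_le_nnnorm _).trans (by exact_mod_cast norm_le)

lemma phase_mul_eq_of_norm_maximal (hQ : Q ∈ Matrix.rowStochastic ℝ ι) {c : Circle} {v : ι → ℂ}
    (hv : (phaseTwist Q u).mulVec v = (c : ℂ) • v) {j : ι} (hj : ∀ k, ‖v k‖ ≤ ‖v j‖) {k : ι}
    (hjk : 0 < Q j k) : u j k * v k = c * v j := by
  have hsum : ∑ i, Q j i • ((u j i : ℂ) * v i) = c * v j := by
    rw [← phaseTwist_mulVec_apply, hv, Pi.smul_apply, smul_eq_mul]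
  rw [← hsum]
  refine eq_sum_smul_of_norm_le (z := fun i => (u j i : ℂ) * v i)
    (fun _ _ => Matrix.nonneg_of_mem_rowStochastic hQ)
    (Matrix.sum_row_of_mem_rowStochastic hQ j) (fun i _ => ?_) (Finset.mem_univ k) hjk.ne'
  rw [hsum, norm_mul, norm_mul, Circle.norm_coe, Circle.norm_coe, one_mul, one_mul]
  exact hj i

lemma norm_eq_norm_of_norm_maximal (hQ : Q ∈ Matrix.rowStochastic ℝ ι) (hirr : Q.IsIrreducible)
    {c : Circle} {v : ι → ℂ} (hv : (phaseTwist Q u).mulVec v = (c : ℂ) • v) {i : ι}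
    (hi : ∀ k, ‖v k‖ ≤ ‖v i‖) (j : ι) : ‖v j‖ = ‖v i‖ := by
  refine forall_of_isIrreducible hirr (S := fun j => ‖v j‖ = ‖v i‖) (fun j k hjk hj => ?_) rfl j
  have heq := phase_mul_eq_of_norm_maximal hQ hv (fun l => (hi l).trans hj.ge) hjk
  calc ‖v k‖ = ‖(u j k : ℂ) * v k‖ := by rw [norm_mul, Circle.norm_coe, one_mul]
    _ = ‖v i‖ := by rw [heq, norm_mul, Circle.norm_coe, one_mul, hj]

lemma exists_circle_of_phaseTwist_mulVec (hQ : Q ∈ Matrix.rowStochastic ℝ ι)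
    (hirr : Q.IsIrreducible) {c : Circle} {v : ι → ℂ} (hv₀ : v ≠ 0)
    (hv : (phaseTwist Q u).mulVec v = (c : ℂ) • v) :
    ∃ z : ι → Circle, ∀ j k, 0 < Q j k → u j k * z k = c * z j := by
  obtain ⟨l, hl⟩ := Function.ne_iff.mp hv₀
  have : Nonempty ι := ⟨l⟩
  obtain ⟨i, hi⟩ := Finite.exists_max fun k => ‖v k‖
  have hnorm := norm_eq_norm_of_norm_maximal hQ hirr hv hi
  have hvi : (‖v i‖ : ℂ) ≠ 0 := by
    rw [← hnorm l]
    exact_mod_cast norm_ne_zero_iff.mpr hl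
  choose z hz using fun k => exists_circle_eq_norm_mul (v k)
  simp only [hnorm] at hz
  refine ⟨z, fun j k hjk => Circle.ext (mul_left_cancel₀ hvi ?_)⟩
  have heq := phase_mul_eq_of_norm_maximal hQ hv (fun l => (hnorm l).trans_le (hnorm j).ge) hjk
  rw [hz j, hz k, mul_left_comm, mul_left_comm (c : ℂ)] at heq
  exact_mod_cast heq

lemma phaseTwist_mulVec_circle (hQ : Q ∈ Matrix.rowStochastic ℝ ι) {c : Circle} {z : ι → Circle}
    (hz : ∀ j k, 0 < Q j k → u j k * z k = c * z j) :
    (phaseTwist Q u).mulVec (fun k => (z k : ℂ)) = (c : ℂ) • fun k => (z k : ℂ) := by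
  funext j
  have hterm (k : ι) : Q j k • ((u j k : ℂ) * z k) = Q j k • ((c : ℂ) * z j) := by
    rcases (Matrix.nonneg_of_mem_rowStochastic hQ (i := j) (j := k)).eq_or_lt with h₀ | hjk
    · rw [← h₀, zero_smul, zero_smul]
    · rw [← Circle.coe_mul, hz j k hjk, Circle.coe_mul]
  rw [phaseTwist_mulVec_apply, Finset.sum_congr rfl fun k _ => hterm k, ← Finset.sum_smul,
    Matrix.sum_row_of_mem_rowStochastic hQ, one_smul, Pi.smul_apply, smul_eq_mul]

lemma spectralRadius_phaseTwist_eq_one_iff_exists_mem_spectrum [Nonempty ι]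
    (hQ : Q ∈ Matrix.rowStochastic ℝ ι) :
    spectralRadius ℂ (phaseTwist Q u) = 1 ↔
      ∃ c : Circle, (c : ℂ) ∈ spectrum ℂ (phaseTwist Q u) := by
  constructor
  · intro h
    open scoped Matrix.Norms.Operator in
    obtain ⟨c, hmem, hc⟩ := spectrum.exists_nnnorm_eq_spectralRadius (phaseTwist Q u)
    rw [h, ENNReal.coe_eq_one, ← NNReal.coe_eq_one, coe_nnnorm] at hc
    exact ⟨⟨c, mem_sphere_zero_iff_norm.mpr hc⟩, hmem⟩
  · rintro ⟨c, hc⟩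
    have hnorm : (1 : ENNReal) = ‖(c : ℂ)‖₊ := by
      rw [← ENNReal.coe_one, ENNReal.coe_inj]
      exact NNReal.eq c.norm_coe.symm
    exact (spectralRadius_phaseTwist_le_one hQ).antisymm (le_iSup₂_of_le (c : ℂ) hc hnorm.le)

lemma spectralRadius_phaseTwist_eq_one_iff [Nonempty ι] (hQ : Q ∈ Matrix.rowStochastic ℝ ι)
    (hirr : Q.IsIrreducible) :
    spectralRadius ℂ (phaseTwist Q u) = 1 ↔
      ∃ (c : Circle) (z : ι → Circle), ∀ j k, 0 < Q j k → u j k * z k = c * z j := by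
  rw [spectralRadius_phaseTwist_eq_one_iff_exists_mem_spectrum hQ]
  refine exists_congr fun c => ?_
  rw [mem_spectrum_iff_exists_mulVec_eq_smul]
  constructor
  · rintro ⟨v, hv₀, hv⟩
    exact exists_circle_of_phaseTwist_mulVec hQ hirr hv₀ hv
  · rintro ⟨z, hz⟩
    have hz₀ : (fun k => (z k : ℂ)) ≠ 0 :=
      Function.ne_iff.mpr ⟨Classical.arbitrary ι, Circle.coe_ne_zero _⟩
    exact ⟨_, hz₀, phaseTwist_mulVec_circle hQ hz⟩

theorem spectral_radius_one_iff_phase_alignment_general [Nonempty ι]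
    (hQ : Q ∈ Matrix.rowStochastic ℝ ι) (hirr : Q.IsIrreducible) (θ : ι → ι → ℝ) :
    spectralRadius ℂ (phaseTwist Q fun j k => 𝐞 (θ j k)) = 1 ↔
      ∃ (s : ℝ) (w : ι → ℝ), ∀ j k, 0 < Q j k →
        Int.fract (θ j k) = Int.fract (s + w j - w k) := by
  rw [spectralRadius_phaseTwist_eq_one_iff hQ hirr, fourierChar_surjective.exists]
  refine exists_congr fun s => ?_
  rw [fourierChar_surjective.comp_left.exists]
  refine exists_congr fun w => forall₃_congr fun j k _ => ?_
  rw [← fourierChar_eq_fourierChar_iff, AddChar.map_sub_eq_div, AddChar.map_add_eq_mul,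
    eq_div_iff_mul_eq']
  rfl

end PhaseTwist

section TransitionMatrix

variable {r : ℕ} {p : Fin r → Fin r → ℝ}

lemma transpose_Pmat_mem_rowStochastic (hpnn : ∀ j k, 0 ≤ p j k) (hpsum : ∀ k, ∑ j, p j k = 1) :
    (Pmat p).transpose ∈ Matrix.rowStochastic ℝ (Fin r) :=
  Matrix.mem_rowStochastic_iff_sum.mpr ⟨fun j k => hpnn k j, hpsum⟩

lemma isIrreducible_transpose_Pmat (hpnn : ∀ j k, 0 ≤ p j k)
    (hirred : ∀ j k, ∃ l : ℕ, 0 < l ∧ 0 < (Pmat p ^ l) j k) : (Pmat p).transpose.IsIrreducible :=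
  ((Matrix.isIrreducible_iff_exists_pow_pos hpnn).mpr hirred).transpose

lemma Amat_eq_phaseTwist (hpnn : ∀ j k, 0 ≤ p j k) (m : ℤ) :
    Amat p m =
      phaseTwist (Pmat p).transpose fun j k => 𝐞 (-(m : ℝ) * Real.logb 2 (p k j)) := by
  ext j k
  simp only [Amat, phaseTwist, Pmat, Matrix.of_apply, Matrix.transpose_apply]
  split_ifs with hpos
  · rw [Complex.real_smul, Real.fourierChar_apply]
    congr 2
    push_cast
    ring
  · rw [(not_lt.mp hpos).antisymm (hpnn k j), zero_smul]

end TransitionMatrix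

theorem spectral_radius_one_iff_phase_alignment (r : ℕ)
    (p : Fin (r + 2) → Fin (r + 2) → ℝ)
    (hpnn : ∀ j k, 0 ≤ p j k) (hpsum : ∀ k, ∑ j, p j k = 1)
    (hirred : ∀ j k : Fin (r + 2), ∃ l : ℕ, 0 < l ∧ 0 < (Pmat p ^ l) j k)
    (m : ℤ) (hm : m ≠ 0) :
    specRad (Amat p m) = 1 ↔
      ∃ (s : ℝ) (w : Fin (r + 2) → ℝ),
        ∀ j k, 0 < p j k →
          Int.fract (-(m : ℝ) * Real.logb 2 (p j k)) =
            Int.fract (s + w k - w j) := by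
  rw [specRad_eq_one_iff, Amat_eq_phaseTwist hpnn, spectral_radius_one_iff_phase_alignment_general
    (transpose_Pmat_mem_rowStochastic hpnn hpsum) (isIrreducible_transpose_Pmat hpnn hirred)]
  exact exists₂_congr fun _ _ => forall_comm
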